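/- arXiv:2602.01847 — 2 statements merged into one kernel-verified Lean document; each statement's English description precedes it below -/
import Mathlib

section
/- Let H=(V_H,E_H) be a fixed graph with at least one edge, P a strict partial order on E_H, let ψ be the Bernoulli distribution with mean r (P[Q=1]=r=1−P[Q=0], 0<r≤1), 0<δ<1, and 𝒢 a sample from Γ_{[n]}(ψ). Let N_δ be the number of δ-temporal occurrences of (H,P) in 𝒢, i.e. the number of injective maps φ:V_H→[n] such that every edge φ(e), e∈E_H, carries a label and these |E_H| labels all lie within an interval of length δ and satisfy the order P under φ. Then Var[N_δ] ≤ (√2·δ·r)^{2|E_H|}·(1 + |E_H|(1−δ)/δ)·n^{2|V_H|}·(2|V_H|)^{2|V_H|}·Σ_{I⊆H, |E_I|≥1} (2δr)^{−|E_I|}·n^{−|V_I|}, where the sum ranges over isomorphism classes of subgraphs I=(V_I,E_I) of H with at least one edge. -/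
open MeasureTheory ProbabilityTheory Filter Set
open scoped ENNReal NNReal Topology

noncomputable section

namespace RTG

/-- A temporal graph on vertex type `V`, given by the finite set of real time labels
attached to each potential edge (unordered pair of vertices). -/
abbrev TGraph (V : Type*) := Sym2 V → Finset ℝ

/-- `P` is a strict partial order supported on the set `s`. -/
def StrictPartialOrderOn {α : Type*} (s : Set α) (P : α → α → Prop) : Prop :=
  (∀ a, ¬ P a a) ∧ (∀ a b c, P a b → P b c → P a c) ∧ ∀ a b, P a b → a ∈ s ∧ b ∈ s

/-- The temporal graph `Λ` contains `(H, P)` as a `δ`-temporal motif. -/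
def Contains {VH V : Type*} (H : SimpleGraph VH) (P : Sym2 VH → Sym2 VH → Prop)
    (Λ : TGraph V) (δ : ℝ) : Prop :=
  ∃ Φ : VH → V, Function.Injective Φ ∧
    ∃ lab : Sym2 VH → ℝ,
      (∀ e ∈ H.edgeSet, lab e ∈ Λ (Sym2.map Φ e)) ∧
      (∀ e f, P e f → lab e < lab f) ∧
      (∀ e ∈ H.edgeSet, ∀ f ∈ H.edgeSet, lab e - lab f < δ)

/-- The sparsity `ρ_H` of a graph `H`: the minimum over subgraphs with at least two
edges of `|V_I| / (|E_I| - 1)`. -/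
def sparsity {VH : Type*} (H : SimpleGraph VH) : ℝ :=
  sInf {x : ℝ | ∃ I : H.Subgraph, 2 ≤ I.edgeSet.ncard ∧
    x = (I.verts.ncard : ℝ) / ((I.edgeSet.ncard : ℝ) - 1)}

/-- The space of label data on a single edge: a number `k` of labels together with the
tuple of `k` label values (indexed in order of sampling). -/
abbrev LabelSpace := Σ k : ℕ, Fin k → ℝ

/-- The uniform distribution on `(0, 1]`. -/
def unif01 : Measure ℝ := volume.restrict (Set.Ioc 0 1)

/-- The uniform distribution on `{1, …, T}` (as a measure on `ℝ`). -/
def unifDisc (T : ℕ) : Measure ℝ :=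
  (T : ℝ≥0∞)⁻¹ • ∑ k ∈ Finset.Icc 1 T, Measure.dirac (k : ℝ)

/-- The distribution of the label data of a single edge: the number of labels is drawn
according to `ψ` and, independently, each label value is drawn according to `ν`. -/
def edgeMeasure (ν : Measure ℝ) (ψ : Measure ℕ) : Measure LabelSpace :=
  Measure.sum fun k => ψ {k} • (Measure.pi fun _ : Fin k => ν).map (Sigma.mk k)

/-- The doubly random temporal graph model on vertex set `V` with label value
distribution `ν` and label multiplicity distribution `ψ`: all edges receive independent
identically distributed label data. -/
def model (V : Type*) [Fintype V] [DecidableEq V] (ν : Measure ℝ) (ψ : Measure ℕ) :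
    Measure (Sym2 V → LabelSpace) :=
  Measure.pi fun _ : Sym2 V => edgeMeasure ν ψ

/-- The continuous doubly random temporal graph `Γ_V(ψ)`. -/
abbrev contModel (V : Type*) [Fintype V] [DecidableEq V] (ψ : Measure ℕ) :
    Measure (Sym2 V → LabelSpace) := model V unif01 ψ

/-- The discrete doubly random temporal graph `Γ_V(ψ, T)`. -/
abbrev discModel (V : Type*) [Fintype V] [DecidableEq V] (ψ : Measure ℕ) (T : ℕ) :
    Measure (Sym2 V → LabelSpace) := model V (unifDisc T) ψ

/-- The temporal graph determined by a sample `ω` of the model: each non-loop edge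
carries the sampled set of labels. -/
def toTGraph {V : Type*} [DecidableEq V] (ω : Sym2 V → LabelSpace) : TGraph V :=
  fun e => if e.IsDiag then ∅ else Finset.image (ω e).2 Finset.univ

/-- The `T`-discretization of a temporal graph: each label `l` is replaced by `⌈T·l⌉`. -/
def discretize {V : Type*} (T : ℕ) (Λ : TGraph V) : TGraph V :=
  fun e => (Λ e).image fun l => ((⌈(T : ℝ) * l⌉ : ℤ) : ℝ)

/-- `ψ` is a label multiplicity distribution: a probability distribution on `ℕ` with
positive finite mean and finite second moment. -/
def IsLMD (ψ : Measure ℕ) : Prop :=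
  IsProbabilityMeasure ψ ∧ Integrable (fun k : ℕ => (k : ℝ)) ψ ∧
    Integrable (fun k : ℕ => (k : ℝ) ^ 2) ψ ∧ 0 < ∫ k, (k : ℝ) ∂ψ

/-- The mean `r` of a label multiplicity distribution. -/
def lmdMean (ψ : Measure ℕ) : ℝ := ∫ k, (k : ℝ) ∂ψ

/-- The second moment `r₂` of a label multiplicity distribution. -/
def lmdSq (ψ : Measure ℕ) : ℝ := ∫ k, (k : ℝ) ^ 2 ∂ψ

/-- `q = P[Q > 0]` for a label multiplicity distribution. -/
def lmdPos (ψ : Measure ℕ) : ℝ := (ψ {k | 0 < k}).toReal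

/-- `v` is reachable from the set `S` by time `t` in the temporal graph `Λ`. -/
def ReachBy {V : Type*} (Λ : TGraph V) (S : Set V) (t : ℝ) (v : V) : Prop :=
  v ∈ S ∨ ∃ (k : ℕ) (f : ℕ → V) (ts : ℕ → ℝ), 0 < k ∧ f 0 ∈ S ∧ f k = v ∧
    (∀ i < k, ts i ∈ Λ s(f i, f (i + 1))) ∧
    (∀ i j, i < j → j < k → ts i < ts j) ∧ ts (k - 1) ≤ t

/-- The reachability ball `B_Λ(S, t)`. -/
def ball {V : Type*} (Λ : TGraph V) (S : Set V) (t : ℝ) : Set V := {v | ReachBy Λ S t v}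

/-- The doubling time of the set `S` in `Λ` (with value `∞` if the reachability ball
never doubles in size). -/
def doubleTime {V : Type*} (Λ : TGraph V) (S : Set V) : ℝ≥0∞ :=
  ⨅ (t : ℝ) (_ : 0 ≤ t ∧ 2 * S.ncard ≤ (ball Λ S t).ncard), ENNReal.ofReal t

/-- The doubling time of the temporal graph `Λ`: the maximum doubling time over all
nonempty vertex sets of size at most half the number of vertices. -/
def doubleAll {V : Type*} [Fintype V] (Λ : TGraph V) : ℝ≥0∞ :=
  ⨆ (S : Set V) (_ : S.Nonempty ∧ 2 * S.ncard ≤ Fintype.card V), doubleTime Λ S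

/-- `Double⁻`: the maximum doubling time over nonempty sets of size at most `n/4`. -/
def doubleSmall {V : Type*} [Fintype V] (Λ : TGraph V) : ℝ≥0∞ :=
  ⨆ (S : Set V) (_ : S.Nonempty ∧ 4 * S.ncard ≤ Fintype.card V), doubleTime Λ S

/-- `Double⁺`: the maximum doubling time over sets of size in `(n/4, n/2]`. -/
def doubleLarge {V : Type*} [Fintype V] (Λ : TGraph V) : ℝ≥0∞ :=
  ⨆ (S : Set V) (_ : Fintype.card V < 4 * S.ncard ∧ 2 * S.ncard ≤ Fintype.card V),
    doubleTime Λ S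

/-- The partial reversal `ℛ(Λ, t)`: every label `l < t` is replaced by `t - l`. -/
def reverse {V : Type*} (Λ : TGraph V) (t : ℝ) : TGraph V :=
  fun e => (Λ e).image fun l => if l < t then t - l else l

/-- The rank of a time `x` among all the labels of the sample `ω`: the number of labels
(on genuine, non-loop, edges) that are at most `x`. -/
def rank {V : Type*} [Fintype V] [DecidableEq V] (ω : Sym2 V → LabelSpace) (x : ℝ) : ℕ :=
  ∑ e ∈ Finset.univ.filter (fun e : Sym2 V => ¬ e.IsDiag),
    Nat.card {i : Fin (ω e).1 // (ω e).2 i ≤ x}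

/-- The order discretization `𝒢^O` of the sample `ω`: each label is replaced by its rank
among all labels. -/
def orderDisc {V : Type*} [Fintype V] [DecidableEq V] (ω : Sym2 V → LabelSpace) :
    TGraph V :=
  fun e => if e.IsDiag then ∅
    else Finset.image (fun i => (rank ω ((ω e).2 i) : ℝ)) Finset.univ


/-- The value of the `j`-th sampled label (0-indexed) on the edge `f` in the sample `ω`
(junk value `0` if there are not that many labels). -/
def labVal {V : Type*} (ω : Sym2 V → LabelSpace) (f : Sym2 V) (j : ℕ) : ℝ :=
  if h : j < (ω f).1 then (ω f).2 ⟨j, h⟩ else 0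

/-- The set of `δ`-temporal occurrences of `(H, P)` in the sample `ω` when each edge
carries at most one label: injective vertex maps `φ` such that every image edge carries
a label and the labels lie within an interval of length `δ` and realize `P`. -/
def bernOcc {VH : Type*} {n : ℕ} (H : SimpleGraph VH) (P : Sym2 VH → Sym2 VH → Prop)
    (δ : ℝ) (ω : Sym2 (Fin n) → LabelSpace) : Set (VH → Fin n) :=
  {φ | Function.Injective φ ∧ (∀ e ∈ H.edgeSet, 0 < (ω (Sym2.map φ e)).1) ∧
    (∀ e ∈ H.edgeSet, ∀ f ∈ H.edgeSet,
      labVal ω (Sym2.map φ e) 0 - labVal ω (Sym2.map φ f) 0 ≤ δ) ∧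
    (∀ e f, P e f → labVal ω (Sym2.map φ e) 0 < labVal ω (Sym2.map φ f) 0)}

/-- The first label (junk `0` if none). -/
def lb (x : LabelSpace) : ℝ := if h : 0 < x.1 then x.2 ⟨0, h⟩ else 0

lemma meas_sigma {β : Type*} [MeasurableSpace β] (f : LabelSpace → β)
    (h : ∀ k, Measurable fun y : Fin k → ℝ => f ⟨k, y⟩) : Measurable f := by
  intro s hs
  exact MeasurableSpace.measurableSet_iInf.2 fun k => h k hs

lemma meas_mk (k : ℕ) : Measurable (fun y : Fin k → ℝ => (⟨k, y⟩ : LabelSpace)) := by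
  intro s hs
  exact MeasurableSpace.measurableSet_iInf.1 hs k

lemma meas_lb : Measurable lb := by
  apply meas_sigma
  intro k
  by_cases h : 0 < k
  · simp only [lb, h, dite_true]
    exact measurable_pi_apply (X := fun _ : Fin k => ℝ) ⟨0, h⟩
  · simp only [lb, h, dite_false]
    exact measurable_const

lemma meas_fst : Measurable (fun x : LabelSpace => x.1) := by
  apply meas_sigma
  intro k
  exact measurable_const

instance : IsProbabilityMeasure unif01 := ⟨by
  rw [unif01]; simp⟩

instance (ψ : Measure ℕ) [IsProbabilityMeasure ψ] : IsProbabilityMeasure (edgeMeasure unif01 ψ) := by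
  constructor
  rw [edgeMeasure, Measure.sum_apply _ MeasurableSet.univ]
  simp only [Measure.smul_apply, smul_eq_mul]
  have hk : ∀ k : ℕ, ((Measure.pi fun _ : Fin k => unif01).map (fun y : Fin k → ℝ => (⟨k, y⟩ : LabelSpace))) univ = 1 := by
    intro k
    rw [Measure.map_apply (meas_mk k) MeasurableSet.univ]
    simp
  refine Eq.trans (tsum_congr fun k => congrArg (ψ {k} * ·) (hk k)) ?_
  show ∑' k, ψ {k} * 1 = 1
  simp only [mul_one]
  have hd : Pairwise (Function.onFun Disjoint fun k : ℕ => ({k} : Set ℕ)) := by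
    intro i j h
    simpa [Function.onFun] using h
  rw [← measure_iUnion hd (fun i => measurableSet_singleton i), iUnion_of_singleton, measure_univ]

lemma psi_zero {ψ : Measure ℕ} [IsProbabilityMeasure ψ] {r : ℝ} (hr : 0 < r) (hr1 : r ≤ 1)
    (hone : ψ {1} = ENNReal.ofReal r) (hzero : ψ {0} = ENNReal.ofReal (1 - r)) (k : ℕ) (hk : 2 ≤ k) :
    ψ {k} = 0 := by
  have h01 : ψ {0, 1} = 1 := by
    rw [show ({0, 1} : Set ℕ) = {0} ∪ {1} by ext; simp [or_comm],
      measure_union (by simp) (measurableSet_singleton _), hone, hzero,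
      ← ENNReal.ofReal_add (by linarith) hr.le]
    simp
  have hc : ψ ({0, 1}ᶜ) = 0 := (prob_compl_eq_zero_iff (by measurability)).2 h01
  refine measure_mono_null ?_ hc
  intro x hx
  simp only [mem_singleton_iff] at hx
  simp only [mem_compl_iff, mem_insert_iff, mem_singleton_iff]
  omega

lemma lint_edge {ψ : Measure ℕ} [IsProbabilityMeasure ψ] {r : ℝ} (hr : 0 < r) (hr1 : r ≤ 1)
    (hone : ψ {1} = ENNReal.ofReal r) (hzero : ψ {0} = ENNReal.ofReal (1 - r))
    (g : ℝ → ℝ≥0∞) (hg : Measurable g) :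
    ∫⁻ x, (if 0 < x.1 then g (lb x) else 0) ∂(edgeMeasure unif01 ψ)
      = ENNReal.ofReal r * ∫⁻ t, g t ∂unif01 := by
  have hm : Measurable fun x : LabelSpace => (if 0 < x.1 then g (lb x) else 0) :=
    Measurable.ite (meas_fst (measurableSet_Ioi (a := 0))) (hg.comp meas_lb) measurable_const
  rw [edgeMeasure, lintegral_sum_measure]
  simp only [lintegral_smul_measure]
  rw [tsum_eq_single 1]
  · rw [hone, lintegral_map hm (meas_mk 1), smul_eq_mul]
    congr 1
    have := (measurePreserving_funUnique unif01 (Fin 1)).lintegral_comp hg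
    rw [← this]
    apply lintegral_congr
    intro a
    simp [lb]
  · intro k hk
    rcases Nat.lt_or_ge k 2 with h | h
    · have : k = 0 := by omega
      subst this
      rw [lintegral_map hm (meas_mk 0)]
      simp
    · rw [psi_zero hr hr1 hone hzero k h]; simp

section pi
variable {ι : Type*} [Fintype ι] [DecidableEq ι] {Ω : Type*} [MeasurableSpace Ω]
  (μ : Measure Ω) [IsProbabilityMeasure μ]

lemma lint_update (f : (ι → Ω) → ℝ≥0∞) (hf : Measurable f) (d : ι) :
    ∫⁻ ω, f ω ∂(Measure.pi fun _ : ι => μ)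
      = ∫⁻ ω, ∫⁻ x, f (Function.update ω d x) ∂μ ∂(Measure.pi fun _ : ι => μ) := by
  have : Nonempty Ω := μ.nonempty_of_neZero
  let x0 : ι → Ω := fun _ => Classical.arbitrary Ω
  have hg : Measurable (∫⋯∫⁻_{d}, f ∂(fun _ : ι => μ)) := hf.lmarginal _
  have e : (fun ω => ∫⁻ x, f (Function.update ω d x) ∂μ) = ∫⋯∫⁻_{d}, f ∂(fun _ : ι => μ) := by
    rw [lmarginal_singleton]
  rw [e, lintegral_eq_lmarginal_univ x0, lintegral_eq_lmarginal_univ x0,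
    lmarginal_erase' _ hf (Finset.mem_univ d), lmarginal_erase' _ hg (Finset.mem_univ d)]
  congr 1
  rw [← e]
  ext ω
  simp

lemma lint_prod (s : Finset ι) (e : ι) (he : e ∉ s) (T : Set (Ω × Ω)) (hT : MeasurableSet T)
    (c : Ω → ℝ≥0∞) (hc : Measurable c) (hTc : ∀ y, μ {x | (y, x) ∈ T} ≤ c y) :
    ∀ (F : (ι → Ω) → ℝ≥0∞), Measurable F → (∀ d ∈ s, ∀ ω x, F (Function.update ω d x) = F ω) →
    ∫⁻ ω, F ω * ∏ d ∈ s, T.indicator 1 (ω e, ω d) ∂(Measure.pi fun _ : ι => μ)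
      ≤ ∫⁻ ω, F ω * c (ω e) ^ s.card ∂(Measure.pi fun _ : ι => μ) := by
  induction s using Finset.induction_on with
  | empty => intro F _ _; simp
  | insert d s hd ih =>
    intro F hF hFd
    have hind : Measurable (T.indicator (1 : Ω × Ω → ℝ≥0∞)) := measurable_one.indicator hT
    have hmi : ∀ d', Measurable fun ω : ι → Ω => T.indicator (1 : Ω × Ω → ℝ≥0∞) (ω e, ω d') := fun d' =>
      hind.comp ((measurable_pi_apply e).prodMk (measurable_pi_apply d'))
    have hmp : Measurable fun ω : ι → Ω => ∏ d ∈ s, T.indicator (1 : Ω × Ω → ℝ≥0∞) (ω e, ω d) :=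
      Finset.measurable_fun_prod _ fun i _ => hmi i
    simp only [Finset.mem_insert, not_or] at he
    calc _ = ∫⁻ ω, ∫⁻ x, (F ω * ∏ d ∈ s, T.indicator 1 (ω e, ω d)) * T.indicator 1 (ω e, x) ∂μ
              ∂(Measure.pi fun _ : ι => μ) := by
          rw [lint_update μ _ _ d]
          · apply lintegral_congr
            intro ω
            apply lintegral_congr
            intro x
            rw [hFd d (by simp), Finset.prod_insert hd, Function.update_self,
              Function.update_of_ne he.1]
            rw [mul_assoc]
            congr 1
            rw [mul_comm]
            congr 1
            apply Finset.prod_congr rfl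
            intro i hi
            rw [Function.update_of_ne]
            rintro rfl; exact hd hi
          · exact hF.mul (Finset.measurable_fun_prod _ fun i _ => hmi i)
      _ ≤ ∫⁻ ω, (F ω * c (ω e)) * ∏ d ∈ s, T.indicator 1 (ω e, ω d) ∂(Measure.pi fun _ : ι => μ) := by
          apply lintegral_mono
          intro ω
          dsimp only
          rw [lintegral_const_mul _ (by exact hind.comp measurable_prodMk_left), mul_right_comm]
          gcongr
          refine le_trans (le_of_eq ?_) (hTc (ω e))
          have := lintegral_indicator_one (μ := μ) (s := {x | (ω e, x) ∈ T}) (measurable_prodMk_left hT)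
          rw [← this]
          rfl
      _ ≤ ∫⁻ ω, (F ω * c (ω e)) * c (ω e) ^ s.card ∂(Measure.pi fun _ : ι => μ) := by
          apply ih he.2
          · exact hF.mul (hc.comp (measurable_pi_apply e))
          · intro d' hd' ω x
            rw [hFd d' (by simp [hd']), Function.update_of_ne]
            rintro rfl; exact he.2 hd'
      _ = _ := by
          rw [Finset.card_insert_of_notMem hd]
          simp only [pow_succ', mul_assoc]
end pi
lemma int_min {δ : ℝ} (hδ : 0 < δ) (hδ1 : δ < 1) (p : ℕ) :
    ∫ t in (0:ℝ)..1, (min δ (1 - t)) ^ p = (1 - δ) * δ ^ p + δ ^ (p + 1) / (p + 1) := by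
  have hc : Continuous fun t : ℝ => (min δ (1 - t)) ^ p := by fun_prop
  rw [← intervalIntegral.integral_add_adjacent_intervals (hc.intervalIntegrable 0 (1 - δ))
    (hc.intervalIntegrable _ 1)]
  congr 1
  · rw [intervalIntegral.integral_congr (g := fun _ => δ ^ p)]
    · simp
    · intro t ht
      rw [uIcc_of_le (by linarith)] at ht
      dsimp only
      rw [min_eq_left (by linarith [ht.2])]
  · rw [intervalIntegral.integral_congr (g := fun t => (1 - t) ^ p)]
    · rw [intervalIntegral.integral_comp_sub_left (fun t => t ^ p) 1]
      simp [integral_pow]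
    · intro t ht
      rw [uIcc_of_le (by linarith)] at ht
      dsimp only
      rw [min_eq_right (by linarith [ht.1])]

lemma lint_min {δ r : ℝ} (hr : 0 < r) (hδ : 0 < δ) (hδ1 : δ < 1) (p : ℕ) :
    ∫⁻ t, ENNReal.ofReal (r * min δ (1 - t)) ^ p ∂unif01
      = ENNReal.ofReal (r ^ p * ((1 - δ) * δ ^ p + δ ^ (p + 1) / (p + 1))) := by
  have hc : Continuous fun t : ℝ => (r * min δ (1 - t)) ^ p := by fun_prop
  have hnn : ∀ t ∈ Ioc (0:ℝ) 1, 0 ≤ r * min δ (1 - t) := fun t ht =>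
    mul_nonneg hr.le (le_min hδ.le (by linarith [ht.2]))
  have h1 : ∫⁻ t, ENNReal.ofReal (r * min δ (1 - t)) ^ p ∂unif01
      = ∫⁻ t in Ioc (0:ℝ) 1, ENNReal.ofReal ((r * min δ (1 - t)) ^ p) := by
    apply setLIntegral_congr_fun measurableSet_Ioc
    intro t ht
    exact (ENNReal.ofReal_pow (hnn t ht) p).symm
  rw [h1, ← ofReal_integral_eq_lintegral_ofReal]
  · rw [← intervalIntegral.integral_of_le zero_le_one]
    simp only [mul_pow]
    rw [intervalIntegral.integral_const_mul, int_min hδ hδ1]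
  · exact (hc.integrableOn_Icc).mono_set Ioc_subset_Icc_self
  · refine (ae_restrict_iff' measurableSet_Ioc).2 (Eventually.of_forall fun t ht => ?_)
    exact pow_nonneg (hnn t ht) p

/-- labelled within `[t, t+δ]` of the first. -/
def T1 (δ : ℝ) : Set (LabelSpace × LabelSpace) :=
  {p | 0 < p.2.1 ∧ lb p.2 ∈ Icc (lb p.1) (lb p.1 + δ)}

/-- labelled within `δ` of the first. -/
def T2 (δ : ℝ) : Set (LabelSpace × LabelSpace) :=
  {p | 0 < p.2.1 ∧ lb p.2 ∈ Icc (lb p.1 - δ) (lb p.1 + δ)}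

lemma meas_T1 (δ : ℝ) : MeasurableSet (T1 δ) := by
  have h1 := meas_lb.comp (measurable_fst : Measurable (Prod.fst : LabelSpace × LabelSpace → _))
  have h2 := meas_lb.comp (measurable_snd : Measurable (Prod.snd : LabelSpace × LabelSpace → _))
  have h3 := meas_fst.comp (measurable_snd : Measurable (Prod.snd : LabelSpace × LabelSpace → _))
  exact (measurableSet_lt measurable_const h3).inter
    ((measurableSet_le h1 h2).inter (measurableSet_le h2 (h1.add_const δ)))

lemma meas_T2 (δ : ℝ) : MeasurableSet (T2 δ) := by
  have h1 := meas_lb.comp (measurable_fst : Measurable (Prod.fst : LabelSpace × LabelSpace → _))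
  have h2 := meas_lb.comp (measurable_snd : Measurable (Prod.snd : LabelSpace × LabelSpace → _))
  have h3 := meas_fst.comp (measurable_snd : Measurable (Prod.snd : LabelSpace × LabelSpace → _))
  exact (measurableSet_lt measurable_const h3).inter
    ((measurableSet_le (h1.sub_const δ) h2).inter (measurableSet_le h2 (h1.add_const δ)))

lemma edge_set {ψ : Measure ℕ} [IsProbabilityMeasure ψ] {r : ℝ} (hr : 0 < r) (hr1 : r ≤ 1)
    (hone : ψ {1} = ENNReal.ofReal r) (hzero : ψ {0} = ENNReal.ofReal (1 - r)) (S : Set ℝ) (hS : MeasurableSet S) :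
    edgeMeasure unif01 ψ {x | 0 < x.1 ∧ lb x ∈ S} = ENNReal.ofReal r * unif01 S := by
  have h := lint_edge hr hr1 hone hzero (S.indicator 1) (measurable_one.indicator hS)
  rw [lintegral_indicator_one hS] at h
  rw [← h, ← lintegral_indicator_one]
  · apply lintegral_congr
    intro x
    by_cases h1 : 0 < x.1 <;> by_cases h2 : lb x ∈ S <;> simp [indicator, h1, h2]
  · exact (meas_fst (measurableSet_Ioi (a := 0))).inter (meas_lb hS)

lemma mT1 {ψ : Measure ℕ} [IsProbabilityMeasure ψ] {r : ℝ} (hr : 0 < r) (hr1 : r ≤ 1)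
    (hone : ψ {1} = ENNReal.ofReal r) (hzero : ψ {0} = ENNReal.ofReal (1 - r))
    {δ : ℝ} (y : LabelSpace) : edgeMeasure unif01 ψ {x | (y, x) ∈ T1 δ}
    ≤ ENNReal.ofReal (r * min δ (1 - lb y)) := by
  rw [show {x | (y, x) ∈ T1 δ} = {x : LabelSpace | 0 < x.1 ∧ lb x ∈ Icc (lb y) (lb y + δ)} from rfl,
    edge_set hr hr1 hone hzero _ measurableSet_Icc]
  rw [ENNReal.ofReal_mul hr.le]
  gcongr
  rw [unif01, Measure.restrict_apply measurableSet_Icc]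
  refine (measure_mono (t := Icc (lb y) (min (lb y + δ) 1)) ?_).trans ?_
  · rintro t ⟨ht, ht'⟩
    exact ⟨ht.1, le_min ht.2 ht'.2⟩
  · rw [Real.volume_Icc]
    apply ENNReal.ofReal_le_ofReal
    rw [← min_sub_sub_right]
    simp

lemma mT2 {ψ : Measure ℕ} [IsProbabilityMeasure ψ] {r : ℝ} (hr : 0 < r) (hr1 : r ≤ 1)
    (hone : ψ {1} = ENNReal.ofReal r) (hzero : ψ {0} = ENNReal.ofReal (1 - r))
    {δ : ℝ} (y : LabelSpace) : edgeMeasure unif01 ψ {x | (y, x) ∈ T2 δ}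
    ≤ ENNReal.ofReal (2 * δ * r) := by
  rw [show {x | (y, x) ∈ T2 δ} = {x : LabelSpace | 0 < x.1 ∧ lb x ∈ Icc (lb y - δ) (lb y + δ)} from rfl,
    edge_set hr hr1 hone hzero _ measurableSet_Icc]
  rw [mul_comm (2 * δ), ENNReal.ofReal_mul hr.le]
  gcongr
  rw [unif01]
  refine (Measure.restrict_apply_le _ _).trans ?_
  rw [Real.volume_Icc]
  apply ENNReal.ofReal_le_ofReal
  linarith

lemma prob_bound {ψ : Measure ℕ} [IsProbabilityMeasure ψ] {r : ℝ} (hr : 0 < r) (hr1 : r ≤ 1)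
    (hone : ψ {1} = ENNReal.ofReal r) (hzero : ψ {0} = ENNReal.ofReal (1 - r))
    {δ : ℝ} (hδ : 0 < δ) (hδ1 : δ < 1) {ι : Type*} [Fintype ι] [DecidableEq ι] (A D : Finset ι) (hAD : Disjoint A D)
    (e0 : ι) (he0 : e0 ∈ A) :
    (Measure.pi fun _ : ι => edgeMeasure unif01 ψ)
      {ω | (∀ f ∈ A, 0 < (ω f).1) ∧ (∀ f ∈ D, 0 < (ω f).1) ∧
        (∀ f ∈ A, ∀ g ∈ A, lb (ω f) - lb (ω g) ≤ δ) ∧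
        (∀ d ∈ D, lb (ω d) - lb (ω e0) ≤ δ ∧ lb (ω e0) - lb (ω d) ≤ δ)}
      ≤ ENNReal.ofReal ((δ * r) ^ A.card * (1 + A.card * (1 - δ) / δ) * (2 * δ * r) ^ D.card) := by
  set μ := edgeMeasure unif01 ψ
  set W : Set (ι → LabelSpace) := {ω | (∀ f ∈ A, 0 < (ω f).1) ∧ (∀ f ∈ D, 0 < (ω f).1) ∧
        (∀ f ∈ A, ∀ g ∈ A, lb (ω f) - lb (ω g) ≤ δ) ∧
        (∀ d ∈ D, lb (ω d) - lb (ω e0) ≤ δ ∧ lb (ω e0) - lb (ω d) ≤ δ)}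
  let B : (ι) → (ι → LabelSpace) → ℝ≥0∞ := fun e ω => if 0 < (ω e).1 then 1 else 0
  let F : ι → (ι → LabelSpace) → ℝ≥0∞ := fun e ω =>
    B e ω * ∏ f ∈ A.erase e, (T1 δ).indicator 1 (ω e, ω f)
  have hBm : ∀ e, Measurable (B e) := fun e =>
    Measurable.ite ((meas_fst.comp (measurable_pi_apply e)) (measurableSet_Ioi (a := 0)))
      measurable_const measurable_const
  have hFm : ∀ e, Measurable (F e) := fun e =>
    (hBm e).mul (Finset.measurable_fun_prod _ fun i _ =>
      (measurable_one.indicator (meas_T1 δ)).comp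
        ((measurable_pi_apply e).prodMk (measurable_pi_apply i)))
  have hGm : ∀ e, Measurable fun ω : ι → LabelSpace =>
      F e ω * ∏ d ∈ D, (T2 δ).indicator 1 (ω e0, ω d) := fun e =>
    (hFm e).mul (Finset.measurable_fun_prod _ fun i _ =>
      (measurable_one.indicator (meas_T2 δ)).comp
        ((measurable_pi_apply e0).prodMk (measurable_pi_apply i)))
  have hF : ∀ e ∈ A, ∫⁻ ω, F e ω ∂(Measure.pi fun _ : ι => μ) ≤
      ENNReal.ofReal (r ^ A.card * ((1 - δ) * δ ^ (A.card - 1) + δ ^ A.card / A.card)) := by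
    intro e he
    obtain ⟨p, hp⟩ : ∃ p, A.card = p + 1 := Nat.exists_eq_succ_of_ne_zero (Finset.card_ne_zero_of_mem he)
    have hcm : Measurable fun t : ℝ => ENNReal.ofReal (r * min δ (1 - t)) := by fun_prop
    refine (lint_prod μ (A.erase e) e (by simp) (T1 δ) (meas_T1 δ)
      (fun y => ENNReal.ofReal (r * min δ (1 - lb y))) (hcm.comp meas_lb)
      (mT1 hr hr1 hone hzero) (B e) (hBm e) ?_).trans ?_
    · intro d hd ω x
      simp only [B]
      rw [Function.update_of_ne (Finset.ne_of_mem_erase hd).symm]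
    · rw [Finset.card_erase_of_mem he, hp, Nat.add_sub_cancel]
      have key := lint_edge hr hr1 hone hzero (fun t => ENNReal.ofReal (r * min δ (1 - t)) ^ p)
        (hcm.pow_const p)
      have hm : Measurable fun x : LabelSpace =>
          (if 0 < x.1 then ENNReal.ofReal (r * min δ (1 - lb x)) ^ p else 0) :=
        Measurable.ite (meas_fst (measurableSet_Ioi (a := 0)))
          ((hcm.pow_const p).comp meas_lb) measurable_const
      have h2 := (measurePreserving_eval (fun _ : ι => μ) e).lintegral_comp hm
      rw [lint_min hr hδ hδ1, ← h2] at key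
      simp only [B, ite_mul, one_mul, zero_mul]
      refine le_of_eq (key.trans ?_)
      rw [← ENNReal.ofReal_mul hr.le]
      congr 1
      push_cast
      ring
  calc _ ≤ ∫⁻ ω, ∑ e ∈ A, F e ω * ∏ d ∈ D, (T2 δ).indicator 1 (ω e0, ω d)
            ∂(Measure.pi fun _ : ι => μ) := by
        have : MeasurableSet W := by
          have hl : ∀ f, Measurable fun ω : ι → LabelSpace => lb (ω f) := fun f =>
            meas_lb.comp (measurable_pi_apply f)
          have hf : ∀ f, MeasurableSet {ω : ι → LabelSpace | 0 < (ω f).1} := fun f =>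
            (meas_fst.comp (measurable_pi_apply f)) (measurableSet_Ioi (a := 0))
          have hd : ∀ f g, MeasurableSet {ω : ι → LabelSpace | lb (ω f) - lb (ω g) ≤ δ} := fun f g =>
            measurableSet_le ((hl f).sub (hl g)) measurable_const
          simp only [W, measurableSet_setOfPred]
          have hf' := fun f => measurableSet_setOfPred.1 (hf f)
          have hd' := fun f g => measurableSet_setOfPred.1 (hd f g)
          refine (Measurable.forall fun f => Measurable.forall fun _ => hf' f).and
            ((Measurable.forall fun f => Measurable.forall fun _ => hf' f).and
            ((Measurable.forall fun f => Measurable.forall fun _ => Measurable.forall fun g =>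
              Measurable.forall fun _ => hd' f g).and
              (Measurable.forall fun f => Measurable.forall fun _ => (hd' _ _).and (hd' _ _))))
        rw [← lintegral_indicator_one this]
        apply lintegral_mono
        intro ω
        by_cases hω : ω ∈ W
        swap
        · simp [hω]
        obtain ⟨h1, h2, h3, h4⟩ := hω
        obtain ⟨e, he, hmin⟩ := A.exists_min_image (fun f => lb (ω f)) ⟨e0, he0⟩
        dsimp only
        refine le_trans ?_ (Finset.single_le_sum (fun _ _ => zero_le) he)
        refine (indicator_le_self' (by simp) ω).trans (le_of_eq ?_)
        simp only [F, B, h1 e he, if_true, Pi.one_apply]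
        rw [Finset.prod_eq_one, Finset.prod_eq_one]
        · simp
        · intro d hd
          rw [indicator_of_mem]; · rfl
          exact ⟨h2 d hd, by linarith [(h4 d hd).2], by linarith [(h4 d hd).1]⟩
        · intro d hd
          have hd := Finset.mem_of_mem_erase hd
          rw [indicator_of_mem]; · rfl
          exact ⟨h1 d hd, hmin d hd, by linarith [h3 d hd e he]⟩
    _ = ∑ e ∈ A, ∫⁻ ω, F e ω * ∏ d ∈ D, (T2 δ).indicator 1 (ω e0, ω d)
            ∂(Measure.pi fun _ : ι => μ) := lintegral_finsetSum _ fun e _ => hGm e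
    _ ≤ ∑ e ∈ A, ENNReal.ofReal (r ^ A.card * ((1 - δ) * δ ^ (A.card - 1) + δ ^ A.card / A.card))
          * ENNReal.ofReal (2 * δ * r) ^ D.card := by
        apply Finset.sum_le_sum
        intro e he
        refine (lint_prod μ D e0 (Finset.disjoint_left.1 hAD he0) (T2 δ) (meas_T2 δ)
          (fun y => ENNReal.ofReal (2 * δ * r)) measurable_const
          (mT2 hr hr1 hone hzero) (F e) (hFm e) ?_).trans ?_
        · intro d hd ω x
          simp only [F, B]
          have hdA : d ∉ A := Finset.disjoint_right.1 hAD hd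
          have hne : ∀ f ∈ A, f ≠ d := fun f hf h => hdA (h ▸ hf)
          rw [Function.update_of_ne (hne e he)]
          congr 1
          apply Finset.prod_congr rfl
          intro f hf
          rw [Function.update_of_ne (hne f (Finset.mem_of_mem_erase hf))]
        · rw [lintegral_mul_const _ (hFm e)]
          gcongr
          exact hF e he
    _ = _ := by
        obtain ⟨p, hp⟩ : ∃ p, A.card = p + 1 := Nat.exists_eq_succ_of_ne_zero (Finset.card_ne_zero_of_mem he0)
        have h1δ : 0 < 1 - δ := by linarith
        rw [Finset.sum_const, ← ENNReal.ofReal_pow (by positivity), ← ENNReal.ofReal_mul (by positivity),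
          nsmul_eq_mul, ← ENNReal.ofReal_natCast, ← ENNReal.ofReal_mul (by positivity), hp]
        congr 1
        rw [Nat.add_sub_cancel]
        push_cast
        field_simp
        ring
lemma count_pairs {VH : Type} [Fintype VH] [DecidableEq VH] (n v : ℕ) (hk : 1 ≤ Fintype.card VH)
    (hv : v ≤ Fintype.card VH) :
    (Finset.univ.filter (fun p : (VH → Fin n) × (VH → Fin n) =>
      v ≤ (Finset.univ.filter (fun x => p.2 x ∈ Finset.univ.image p.1)).card)).card
    ≤ (2 * Fintype.card VH) ^ (2 * Fintype.card VH) * n ^ (2 * Fintype.card VH - v) := by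
  set k := Fintype.card VH with hkdef
  let Q : (VH → Fin n) → Finset VH → Finset (VH → Fin n) := fun φ T =>
    Fintype.piFinset (fun x => if x ∈ T then Finset.univ.image φ else Finset.univ)
  have hQ : ∀ φ, ∀ T ∈ Finset.powersetCard v (Finset.univ : Finset VH),
      (Q φ T).card ≤ k ^ v * n ^ (k - v) := by
    intro φ T hT
    have hTc := (Finset.mem_powersetCard.1 hT).2
    rw [Fintype.card_piFinset]
    calc _ ≤ ∏ x : VH, (if x ∈ T then k else n) := by
          apply Finset.prod_le_prod'
          intro x _
          split_ifs
          · exact Finset.card_image_le.trans (le_of_eq (by simp [hkdef]))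
          · simp
      _ = _ := by
          rw [Finset.prod_ite]
          simp only [Finset.prod_const]
          have h1 : (Finset.univ.filter (fun x => x ∈ T)) = T := by ext; simp
          have h2 : (Finset.univ.filter (fun x => x ∉ T)) = Tᶜ := by ext; simp
          rw [h1, h2, Finset.card_compl, hTc]
  have hsub : (Finset.univ.filter (fun p : (VH → Fin n) × (VH → Fin n) =>
      v ≤ (Finset.univ.filter (fun x => p.2 x ∈ Finset.univ.image p.1)).card)) ⊆
      (Finset.univ : Finset (VH → Fin n)).biUnion fun φ =>
        (Finset.powersetCard v (Finset.univ : Finset VH)).biUnion fun T => (Q φ T).image (Prod.mk φ) := by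
    rintro ⟨φ, φ'⟩ hp
    simp only [Finset.mem_filter, Finset.mem_univ, true_and] at hp
    obtain ⟨T, hT, hTc⟩ := Finset.exists_subset_card_eq hp
    simp only [Finset.mem_biUnion, Finset.mem_univ, true_and, Finset.mem_image]
    refine ⟨φ, T, Finset.mem_powersetCard.2 ⟨Finset.subset_univ _, hTc⟩, φ', ?_, rfl⟩
    rw [Fintype.mem_piFinset]
    intro x
    split_ifs with h
    · exact (Finset.mem_filter.1 (hT h)).2
    · exact Finset.mem_univ _
  refine (Finset.card_le_card hsub).trans ?_
  calc _ ≤ (Finset.univ : Finset (VH → Fin n)).card * (2 ^ k * (k ^ v * n ^ (k - v))) := by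
        apply Finset.card_biUnion_le_card_mul
        intro φ _
        refine (Finset.card_biUnion_le_card_mul _ _ (k ^ v * n ^ (k - v)) ?_).trans ?_
        · intro T hT
          exact Finset.card_image_le.trans (hQ φ T hT)
        · gcongr
          rw [Finset.card_powersetCard]
          exact Nat.choose_le_two_pow _ _
    _ = (2 ^ k * k ^ v) * n ^ (2 * k - v) := by
        rw [show 2 * k - v = k + (k - v) by omega, pow_add]
        simp [← hkdef]
        ring
    _ ≤ _ := by
        gcongr
        calc 2 ^ k * k ^ v ≤ 2 ^ k * k ^ k := by gcongr
          _ = (2 * k) ^ k := (mul_pow _ _ _).symm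
          _ ≤ _ := by gcongr <;> omega

section graph
variable {VH : Type} [Fintype VH] [DecidableEq VH] (H : SimpleGraph VH) {n : ℕ}

open Classical in
/-- The image of the edge set. -/
def imE (φ : VH → Fin n) : Finset (Sym2 (Fin n)) :=
  (Finset.univ.filter (fun e => e ∈ H.edgeSet)).image (Sym2.map φ)

lemma mem_imE (φ : VH → Fin n) (f : Sym2 (Fin n)) :
    f ∈ imE H φ ↔ ∃ e ∈ H.edgeSet, Sym2.map φ e = f := by
  simp [imE]

lemma card_imE (φ : VH → Fin n) (hφ : Function.Injective φ) :
    (imE H φ).card = H.edgeSet.ncard := by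
  classical
  rw [imE, Finset.card_image_of_injective _ (Sym2.map.injective hφ), Set.ncard_eq_toFinset_card']
  congr 1
  ext; simp

/-- The pull-back of the intersection of two copies. -/
def interSub (φ φ' : VH → Fin n) : H.Subgraph where
  verts := {v | ∃ w, H.Adj v w ∧ s(φ v, φ w) ∈ imE H φ'}
  Adj v w := H.Adj v w ∧ s(φ v, φ w) ∈ imE H φ'
  adj_sub h := h.1
  edge_vert h := ⟨_, h⟩
  symm := ⟨fun v w h => ⟨h.1.symm, by rw [Sym2.eq_swap]; exact h.2⟩⟩

lemma mem_interSub (φ φ' : VH → Fin n) (e : Sym2 VH) :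
    e ∈ (interSub H φ φ').edgeSet ↔ e ∈ H.edgeSet ∧ Sym2.map φ e ∈ imE H φ' := by
  induction e with
  | _ v w => simp [interSub]

lemma card_interSub (φ φ' : VH → Fin n) (hφ : Function.Injective φ) :
    (interSub H φ φ').edgeSet.ncard = (imE H φ ∩ imE H φ').card := by
  rw [← Set.ncard_coe_finset, ← Set.ncard_image_of_injective _ (Sym2.map.injective hφ)]
  congr 1
  ext f
  simp only [Set.mem_image, mem_interSub, Finset.coe_inter, Set.mem_inter_iff, Finset.mem_coe,
    mem_imE H φ]
  constructor
  · rintro ⟨e, ⟨h1, h2⟩, rfl⟩; exact ⟨⟨e, h1, rfl⟩, h2⟩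
  · rintro ⟨⟨e, h1, rfl⟩, h2⟩; exact ⟨e, ⟨h1, h2⟩, rfl⟩

lemma verts_interSub (φ φ' : VH → Fin n) (hφ : Function.Injective φ) :
    (interSub H φ φ').verts.ncard ≤
      (Finset.univ.filter (fun x => φ' x ∈ Finset.univ.image φ)).card := by
  rw [← Set.ncard_image_of_injective _ hφ]
  refine le_trans ?_ (Finset.card_image_le (f := φ'))
  rw [← Set.ncard_coe_finset]
  apply Set.ncard_le_ncard _ (Finset.finite_toSet _)
  rintro _ ⟨v, ⟨w, hw, hm⟩, rfl⟩
  obtain ⟨e, he, hem⟩ := (mem_imE H _ _).1 hm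
  have : φ v ∈ Sym2.map φ' e := by rw [hem]; simp
  obtain ⟨x, hx, hxv⟩ := Sym2.mem_map.1 this
  simp only [Finset.coe_image, Set.mem_image, Finset.mem_coe, Finset.mem_filter, Finset.mem_univ,
    true_and, Finset.mem_image]
  exact ⟨x, ⟨v, hxv.symm⟩, hxv⟩

lemma iso_card {I J : H.Subgraph} (f : I.coe ≃g J.coe) :
    I.verts.ncard = J.verts.ncard ∧ I.edgeSet.ncard = J.edgeSet.ncard := by
  constructor
  · rw [← Nat.card_coe_set_eq, ← Nat.card_coe_set_eq]
    exact Nat.card_congr f.toEquiv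
  · rw [← SimpleGraph.Subgraph.image_coe_edgeSet_coe, ← SimpleGraph.Subgraph.image_coe_edgeSet_coe,
      Set.ncard_image_of_injective _ (Sym2.map.injective Subtype.val_injective),
      Set.ncard_image_of_injective _ (Sym2.map.injective Subtype.val_injective)]
    rw [← Nat.card_coe_set_eq, ← Nat.card_coe_set_eq]
    exact Nat.card_congr f.mapEdgeSet

lemma occ_congr (P : Sym2 VH → Sym2 VH → Prop) (hP : StrictPartialOrderOn H.edgeSet P) (δ : ℝ)
    (φ : VH → Fin n) (ω ω' : Sym2 (Fin n) → LabelSpace) (h : ∀ f ∈ imE H φ, ω f = ω' f) :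
    φ ∈ bernOcc H P δ ω ↔ φ ∈ bernOcc H P δ ω' := by
  have hE : ∀ e ∈ H.edgeSet, ω (Sym2.map φ e) = ω' (Sym2.map φ e) := fun e he =>
    h _ ((mem_imE H _ _).2 ⟨e, he, rfl⟩)
  have hL : ∀ e ∈ H.edgeSet, labVal ω (Sym2.map φ e) 0 = labVal ω' (Sym2.map φ e) 0 := fun e he => by
    change lb _ = lb _
    rw [hE e he]
  have key : ∀ ω ω' : Sym2 (Fin n) → LabelSpace,
      (∀ e ∈ H.edgeSet, ω (Sym2.map φ e) = ω' (Sym2.map φ e)) →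
      (∀ e ∈ H.edgeSet, labVal ω (Sym2.map φ e) 0 = labVal ω' (Sym2.map φ e) 0) →
      φ ∈ bernOcc H P δ ω → φ ∈ bernOcc H P δ ω' := by
    rintro ω ω' hE hL ⟨h1, h2, h3, h4⟩
    refine ⟨h1, fun e he => ?_, fun e he f hf => ?_, fun e f hef => ?_⟩
    · rw [← hE e he]; exact h2 e he
    · rw [← hL e he, ← hL f hf]; exact h3 e he f hf
    · have := hP.2.2 e f hef
      rw [← hL e this.1, ← hL f this.2]; exact h4 e f hef
  exact ⟨key ω ω' hE hL, key ω' ω (fun e he => (hE e he).symm) (fun e he => (hL e he).symm)⟩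

/-- The event that `φ` is an occurrence. -/
def occ (P : Sym2 VH → Sym2 VH → Prop) (δ : ℝ) (φ : VH → Fin n) : Set (Sym2 (Fin n) → LabelSpace) :=
  {ω | φ ∈ bernOcc H P δ ω}

lemma meas_occ (P : Sym2 VH → Sym2 VH → Prop) (δ : ℝ) (φ : VH → Fin n) :
    MeasurableSet (occ H P δ φ) := by
  have hl : ∀ f, Measurable fun ω : Sym2 (Fin n) → LabelSpace => labVal ω f 0 := fun f =>
    meas_lb.comp (measurable_pi_apply f)
  have hf : ∀ f, Measurable fun ω : Sym2 (Fin n) → LabelSpace => 0 < (ω f).1 := fun f =>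
    measurableSet_setOfPred.1 ((meas_fst.comp (measurable_pi_apply f)) (measurableSet_Ioi (a := 0)))
  have hd : ∀ f g, Measurable fun ω : Sym2 (Fin n) → LabelSpace =>
      labVal ω f 0 - labVal ω g 0 ≤ δ := fun f g =>
    measurableSet_setOfPred.1 (measurableSet_le ((hl f).sub (hl g)) measurable_const)
  have hlt : ∀ f g, Measurable fun ω : Sym2 (Fin n) → LabelSpace =>
      labVal ω f 0 < labVal ω g 0 := fun f g =>
    measurableSet_setOfPred.1 (measurableSet_lt (hl f) (hl g))
  refine measurableSet_setOfPred.2 ?_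
  exact measurable_const.and
    ((Measurable.forall fun f => Measurable.forall fun _ => hf _).and
      ((Measurable.forall fun f => Measurable.forall fun _ => Measurable.forall fun g =>
              Measurable.forall fun _ => hd _ _).and
        (Measurable.forall fun f => Measurable.forall fun g => Measurable.forall fun _ => hlt _ _)))

/-- The indicator random variable. -/
def Xv (P : Sym2 VH → Sym2 VH → Prop) (δ : ℝ) (φ : VH → Fin n) (ω : Sym2 (Fin n) → LabelSpace) : ℝ :=
  (occ H P δ φ).indicator 1 ω

lemma ncard_eq (P : Sym2 VH → Sym2 VH → Prop) (δ : ℝ) :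
    (fun ω => ((bernOcc (n := n) H P δ ω).ncard : ℝ)) = ∑ φ : VH → Fin n, Xv H P δ φ := by
  classical
  ext ω
  rw [Finset.sum_apply, Set.ncard_eq_toFinset_card']
  simp only [Xv, indicator, Pi.one_apply, Finset.sum_boole]
  congr 2
  ext φ
  simp only [Set.mem_toFinset, Finset.mem_filter, Finset.mem_univ, true_and]
  rfl

variable {ψ : Measure ℕ} [IsProbabilityMeasure ψ]

instance : IsProbabilityMeasure (contModel (Fin n) ψ) := by
  unfold contModel model; infer_instance

lemma memLp_Xv (P : Sym2 VH → Sym2 VH → Prop) (δ : ℝ) (φ : VH → Fin n) :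
    MemLp (Xv H P δ φ) 2 (contModel (Fin n) ψ) :=
  (memLp_const (1 : ℝ)).indicator (meas_occ H P δ φ)

lemma cov_zero (P : Sym2 VH → Sym2 VH → Prop) (hP : StrictPartialOrderOn H.edgeSet P)
    (δ : ℝ) (φ φ' : VH → Fin n) (hd : Disjoint (imE H φ) (imE H φ')) :
    covariance (Xv H P δ φ) (Xv H P δ φ') (contModel (Fin n) ψ) = 0 := by
  classical
  refine IndepFun.covariance_eq_zero ?_ (memLp_Xv H P δ φ) (memLp_Xv H P δ φ')
  have hi : iIndepFun (fun (i : Sym2 (Fin n)) (ω : Sym2 (Fin n) → LabelSpace) => ω i)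
      (contModel (Fin n) ψ) := iIndepFun_pi (X := fun _ x => x) (fun _ => aemeasurable_id)
  have h2 := hi.indepFun_finset (imE H φ) (imE H φ') hd (fun i => measurable_pi_apply i)
  let ext (S : Finset (Sym2 (Fin n))) (y : S → LabelSpace) : Sym2 (Fin n) → LabelSpace := fun f =>
    if h : f ∈ S then y ⟨f, h⟩ else ⟨0, fun _ => 0⟩
  have hext : ∀ S, Measurable (ext S) := by
    intro S
    refine measurable_pi_lambda _ fun f => ?_
    by_cases h : f ∈ S
    · simp only [ext, h, dite_true]; exact measurable_pi_apply (X := fun _ : S => LabelSpace) _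
    · simp only [ext, h, dite_false]; exact measurable_const
  have hX : ∀ φ : VH → Fin n, Measurable (Xv H P δ φ) := fun φ =>
    measurable_one.indicator (meas_occ H P δ φ)
  have hc : ∀ φ : VH → Fin n, Xv H P δ φ = (Xv H P δ φ ∘ ext (imE H φ)) ∘ fun ω (i : imE H φ) => ω i := by
    intro φ
    funext ω
    simp only [Function.comp, Xv, indicator, occ, mem_ofPred_eq, Pi.one_apply]
    congr 1
    refine propext (occ_congr H P hP δ φ _ _ ?_)
    intro f hf
    simp [ext, hf]
  rw [hc φ, hc φ']
  exact h2.comp ((hX φ).comp (hext _)) ((hX φ').comp (hext _))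

lemma cov_le_measure (P : Sym2 VH → Sym2 VH → Prop) (δ : ℝ) (φ φ' : VH → Fin n) :
    covariance (Xv H P δ φ) (Xv H P δ φ') (contModel (Fin n) ψ)
      ≤ (contModel (Fin n) ψ).real (occ H P δ φ ∩ occ H P δ φ') := by
  rw [covariance_eq_sub (memLp_Xv H P δ φ) (memLp_Xv H P δ φ')]
  have h0 : ∀ φ : VH → Fin n, 0 ≤ ∫ ω, Xv H P δ φ ω ∂(contModel (Fin n) ψ) := fun φ =>
    integral_nonneg fun ω => indicator_nonneg (by simp) ω
  have h1 : Xv H P δ φ * Xv H P δ φ' = (occ H P δ φ ∩ occ H P δ φ').indicator 1 := by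
    funext ω
    simp only [Xv, Pi.mul_apply]
    rw [Set.inter_indicator_one]; rfl
  rw [h1, integral_indicator_one ((meas_occ H P δ φ).inter (meas_occ H P δ φ'))]
  linarith [mul_nonneg (h0 φ) (h0 φ')]

lemma cov_zero' (P : Sym2 VH → Sym2 VH → Prop) (δ : ℝ) (φ φ' : VH → Fin n)
    (h : ¬ (Function.Injective φ ∧ Function.Injective φ')) :
    covariance (Xv H P δ φ) (Xv H P δ φ') (contModel (Fin n) ψ) ≤ 0 := by
  refine (cov_le_measure H P δ φ φ').trans (le_of_eq ?_)
  have : occ H P δ φ ∩ occ H P δ φ' = ∅ := by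
    ext ω
    simp only [Set.mem_inter_iff, Set.mem_empty_iff_false, iff_false]
    rintro ⟨h1, h2⟩
    exact h ⟨h1.1, h2.1⟩
  rw [this]; simp

lemma cov_le {r : ℝ} (hr : 0 < r) (hr1 : r ≤ 1)
    (hone : ψ {1} = ENNReal.ofReal r) (hzero : ψ {0} = ENNReal.ofReal (1 - r))
    {δ : ℝ} (hδ : 0 < δ) (hδ1 : δ < 1) (P : Sym2 VH → Sym2 VH → Prop) (φ φ' : VH → Fin n)
    (h1 : Function.Injective φ) (h2 : Function.Injective φ')
    (hd : ¬ Disjoint (imE H φ) (imE H φ')) :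
    covariance (Xv H P δ φ) (Xv H P δ φ') (contModel (Fin n) ψ) ≤
      (δ * r) ^ H.edgeSet.ncard * (1 + H.edgeSet.ncard * (1 - δ) / δ)
        * (2 * δ * r) ^ (H.edgeSet.ncard - (interSub H φ φ').edgeSet.ncard) := by
  refine (cov_le_measure H P δ φ φ').trans ?_
  obtain ⟨e0, he0, he0'⟩ := Finset.not_disjoint_iff.1 hd
  have hb := prob_bound hr hr1 hone hzero hδ hδ1 (imE H φ) (imE H φ' \ imE H φ)
    Finset.disjoint_sdiff e0 he0
  have hD : (imE H φ' \ imE H φ).card = H.edgeSet.ncard - (interSub H φ φ').edgeSet.ncard := by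
    rw [Finset.card_sdiff, card_imE H φ' h2, card_interSub H φ φ' h1]
  have h1δ : 0 < 1 - δ := by linarith
  rw [hD, card_imE H φ h1] at hb
  refine ENNReal.toReal_le_of_le_ofReal (by positivity) (le_trans (measure_mono ?_) hb)
  rintro ω ⟨⟨-, a2, a3, -⟩, ⟨-, b2, b3, -⟩⟩
  have hA : ∀ f ∈ imE H φ, 0 < (ω f).1 := by
    intro f hf
    obtain ⟨e, he, rfl⟩ := (mem_imE H _ _).1 hf
    exact a2 e he
  have hA' : ∀ f ∈ imE H φ', 0 < (ω f).1 := by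
    intro f hf
    obtain ⟨e, he, rfl⟩ := (mem_imE H _ _).1 hf
    exact b2 e he
  have hB : ∀ f ∈ imE H φ, ∀ g ∈ imE H φ, lb (ω f) - lb (ω g) ≤ δ := by
    intro f hf g hg
    obtain ⟨e, he, rfl⟩ := (mem_imE H _ _).1 hf
    obtain ⟨e', he', rfl⟩ := (mem_imE H _ _).1 hg
    exact a3 e he e' he'
  have hB' : ∀ f ∈ imE H φ', ∀ g ∈ imE H φ', lb (ω f) - lb (ω g) ≤ δ := by
    intro f hf g hg
    obtain ⟨e, he, rfl⟩ := (mem_imE H _ _).1 hf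
    obtain ⟨e', he', rfl⟩ := (mem_imE H _ _).1 hg
    exact b3 e he e' he'
  exact ⟨hA, fun f hf => hA' f (Finset.mem_sdiff.1 hf).1, hB, fun d hd =>
    ⟨hB' _ (Finset.mem_sdiff.1 hd).1 _ he0', hB' _ he0' _ (Finset.mem_sdiff.1 hd).1⟩⟩
end graph

/-- Second-moment upper bound for Bernoulli label multiplicity
distributions: the variance of the number of `δ`-temporal occurrences of `(H, P)` in
`Γ_{[n]}(ψ)`, where the sum ranges over a set `R` of representatives of the isomorphism
classes of subgraphs of `H` with at least one edge. -/
theorem statement14 {VH : Type} [Fintype VH] [DecidableEq VH] (H : SimpleGraph VH)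
    (hH : 1 ≤ H.edgeSet.ncard)
    (P : Sym2 VH → Sym2 VH → Prop) (hP : StrictPartialOrderOn H.edgeSet P)
    (r : ℝ) (hr : 0 < r) (hr1 : r ≤ 1)
    (ψ : Measure ℕ) (hprob : IsProbabilityMeasure ψ)
    (hone : ψ {1} = ENNReal.ofReal r) (hzero : ψ {0} = ENNReal.ofReal (1 - r))
    (δ : ℝ) (hδ : 0 < δ) (hδ1 : δ < 1) (n : ℕ)
    (R : Set H.Subgraph) (hRfin : R.Finite)
    (hRedge : ∀ J ∈ R, J.edgeSet.Nonempty)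
    (hRrep : ∀ I : H.Subgraph, I.edgeSet.Nonempty →
      ∃ J ∈ R, Nonempty (I.coe ≃g J.coe))
    (hRuniq : ∀ J₁ ∈ R, ∀ J₂ ∈ R, Nonempty (J₁.coe ≃g J₂.coe) → J₁ = J₂) :
    variance (fun ω => ((bernOcc H P δ ω).ncard : ℝ)) (contModel (Fin n) ψ)
      ≤ (Real.sqrt 2 * δ * r) ^ (2 * H.edgeSet.ncard)
        * (1 + H.edgeSet.ncard * (1 - δ) / δ)
        * (n : ℝ) ^ (2 * Fintype.card VH)
        * ((2 * Fintype.card VH : ℕ) : ℝ) ^ (2 * Fintype.card VH)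
        * ∑ᶠ I ∈ R,
            (2 * δ * r) ^ (-(I.edgeSet.ncard : ℤ)) * (n : ℝ) ^ (-(I.verts.ncard : ℤ)) := by
  classical
  have : IsProbabilityMeasure ψ := hprob
  set m := H.edgeSet.ncard with hm
  set k := Fintype.card VH with hkd
  have h1δ : 0 < 1 - δ := by linarith
  set C : ℝ := (δ * r) ^ m * (1 + m * (1 - δ) / δ) with hC
  have hC0 : 0 ≤ C := by positivity
  have hk : 1 ≤ k := by
    have hne : H.edgeSet.Nonempty := Set.nonempty_of_ncard_ne_zero (by omega)
    obtain ⟨e, -⟩ := hne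
    induction e with
    | _ v w => exact Fintype.card_pos_iff.2 ⟨v⟩
  have hsub : ∀ J : H.Subgraph, J.edgeSet.ncard ≤ m ∧ J.verts.ncard ≤ k := by
    intro J
    refine ⟨Set.ncard_le_ncard (SimpleGraph.Subgraph.edgeSet_subset J) (Set.toFinite _), ?_⟩
    rw [hkd, ← Nat.card_eq_fintype_card, ← Set.ncard_univ]
    exact Set.ncard_le_ncard (Set.subset_univ _) (Set.toFinite _)
  rw [finsum_mem_eq_finite_toFinset_sum _ hRfin, ncard_eq,
    variance_sum (fun φ => memLp_Xv H P δ φ)]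
  let g : (VH → Fin n) × (VH → Fin n) → ℕ := fun p =>
    (Finset.univ.filter (fun x => p.2 x ∈ Finset.univ.image p.1)).card
  have step : ∀ p : (VH → Fin n) × (VH → Fin n),
      covariance (Xv H P δ p.1) (Xv H P δ p.2) (contModel (Fin n) ψ) ≤
      ∑ J ∈ hRfin.toFinset, if J.verts.ncard ≤ g p then
        C * (2 * δ * r) ^ (m - J.edgeSet.ncard) else 0 := by
    rintro ⟨φ, φ'⟩
    have hnn : ∀ J ∈ hRfin.toFinset, 0 ≤ (if J.verts.ncard ≤ g (φ, φ') then
        C * (2 * δ * r) ^ (m - J.edgeSet.ncard) else 0) := by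
      intro J _
      split_ifs
      · positivity
      · exact le_rfl
    by_cases hinj : Function.Injective φ ∧ Function.Injective φ'
    swap
    · exact (cov_zero' H P δ φ φ' hinj).trans (Finset.sum_nonneg hnn)
    by_cases hd : Disjoint (imE H φ) (imE H φ')
    · exact (cov_zero H P hP δ φ φ' hd).le.trans (Finset.sum_nonneg hnn)
    have hne : (interSub H φ φ').edgeSet.Nonempty := by
      obtain ⟨f, h1, h2⟩ := Finset.not_disjoint_iff.1 hd
      obtain ⟨e, he, rfl⟩ := (mem_imE H _ _).1 h1
      exact ⟨e, (mem_interSub H _ _ _).2 ⟨he, h2⟩⟩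
    obtain ⟨J, hJ, ⟨f⟩⟩ := hRrep _ hne
    obtain ⟨hv, he⟩ := iso_card H f
    refine (cov_le H hr hr1 hone hzero hδ hδ1 P φ φ' hinj.1 hinj.2 hd).trans ?_
    refine le_trans (le_of_eq ?_) (Finset.single_le_sum hnn (hRfin.mem_toFinset.2 hJ))
    rw [if_pos, ← he]
    rw [← hv]
    exact verts_interSub H φ φ' hinj.1
  calc _ = ∑ p : (VH → Fin n) × (VH → Fin n),
        covariance (Xv H P δ p.1) (Xv H P δ p.2) (contModel (Fin n) ψ) :=
        (Fintype.sum_prod_type _).symm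
    _ ≤ ∑ p : (VH → Fin n) × (VH → Fin n), ∑ J ∈ hRfin.toFinset, if J.verts.ncard ≤ g p then
        C * (2 * δ * r) ^ (m - J.edgeSet.ncard) else 0 := Finset.sum_le_sum fun p _ => step p
    _ = ∑ J ∈ hRfin.toFinset, ((Finset.univ.filter (fun p => J.verts.ncard ≤ g p)).card : ℝ) *
        (C * (2 * δ * r) ^ (m - J.edgeSet.ncard)) := by
        rw [Finset.sum_comm]
        refine Finset.sum_congr rfl fun J _ => ?_
        rw [← Finset.sum_filter, Finset.sum_const, nsmul_eq_mul]
    _ ≤ _ := by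
        rw [Finset.mul_sum]
        refine Finset.sum_le_sum fun J hJ => ?_
        obtain ⟨hJe, hJv⟩ := hsub J
        have hcnt : ((Finset.univ.filter (fun p => J.verts.ncard ≤ g p)).card : ℝ) ≤
            ((2 * k : ℕ) : ℝ) ^ (2 * k) * (n : ℝ) ^ (2 * k - J.verts.ncard) := by
          exact_mod_cast count_pairs n J.verts.ncard hk hJv
        refine (mul_le_mul_of_nonneg_right hcnt (by positivity)).trans (le_of_eq ?_)
        have hx : (2 * δ * r) ≠ 0 := by positivity
        have e1 : (2 * δ * r) ^ (m - J.edgeSet.ncard) =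
            (2 * δ * r) ^ m * (2 * δ * r) ^ (-(J.edgeSet.ncard : ℤ)) := by
          rw [pow_sub₀ _ hx hJe, zpow_neg, zpow_natCast]
        have e2 : (n : ℝ) ^ (2 * k - J.verts.ncard) =
            (n : ℝ) ^ (2 * k) * (n : ℝ) ^ (-(J.verts.ncard : ℤ)) := by
          rcases Nat.eq_zero_or_pos n with h0 | h0
          · subst h0
            simp only [Nat.cast_zero]
            rw [zero_pow (by omega), zero_pow (by omega), zero_mul]
          · rw [pow_sub₀ _ (by positivity) (by omega), zpow_neg, zpow_natCast]
        have e3 : (Real.sqrt 2 * δ * r) ^ (2 * m) = (δ * r) ^ m * (2 * δ * r) ^ m := by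
          rw [pow_mul, ← mul_pow]
          congr 1
          rw [mul_pow, mul_pow, Real.sq_sqrt (by norm_num)]
          ring
        rw [e1, e2, e3, hC]
        ring

end RTG
end
end

section
/- Let r be a positive integer, let ψ be the distribution degenerate at r, and let 𝒢=(V,E,λ) be a sample from Γ_{[n]}(ψ) (so that almost surely all labels are distinct), with 𝒢^O its order discretization. Then for any constants α,β>0, the probability that there exists a nonempty proper subset S⊂V such that the number of labels of 𝒢^O with (discretized) time at most α·n·log n lying on edges between S and V∖S exceeds β·r·|S|·(n−|S|) is o(n^{−1}) as n→∞. -/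
open MeasureTheory ProbabilityTheory Filter Set
open scoped ENNReal NNReal Topology

noncomputable section

namespace RTG

/-- The number of labels of the order discretization of `ω` with (discretized) time at
most `t` lying on an edge between `S` and its complement. -/
def cutCount {n : ℕ} (ω : Sym2 (Fin n) → LabelSpace) (S : Set (Fin n)) (t : ℝ) : ℕ :=
  ∑ᶠ e ∈ {e : Sym2 (Fin n) | ∃ u v, u ∈ S ∧ v ∉ S ∧ e = s(u, v)},
    Nat.card {i : Fin (ω e).1 // (rank ω ((ω e).2 i) : ℝ) ≤ t}

instance unif01_prob : IsProbabilityMeasure unif01 := ⟨by simp [unif01]⟩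

lemma edgeMeasure_dirac (ν : Measure ℝ) (r : ℕ) :
    edgeMeasure ν (Measure.dirac r) = (Measure.pi fun _ : Fin r => ν).map (Sigma.mk r) := by
  unfold edgeMeasure
  ext s hs
  rw [Measure.sum_apply _ hs, tsum_eq_single r]
  · simp
  · intro k hk
    have : r ∉ ({k} : Set ℕ) := fun h => hk (by simpa using h.symm)
    simp [this]

lemma measurable_sigma_mk' (k : ℕ) :
    Measurable (fun x : Fin k → ℝ => (⟨k, x⟩ : LabelSpace)) :=
  fun _ hs => (MeasurableSpace.measurableSet_iInf.1 hs k)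

lemma measurable_of_sigma {f : LabelSpace → ℝ≥0∞}
    (h : ∀ k, Measurable fun x : Fin k → ℝ => f ⟨k, x⟩) : Measurable f :=
  fun _ hs => MeasurableSpace.measurableSet_iInf.2 fun k => h k hs

instance edge_prob (r : ℕ) : IsProbabilityMeasure (edgeMeasure unif01 (Measure.dirac r)) := by
  rw [edgeMeasure_dirac]
  exact Measure.isProbabilityMeasure_map (measurable_sigma_mk' r).aemeasurable

/-- Product integral over a finite product of probability spaces. -/
lemma lintegral_pi_prod' {ι X : Type*} [Fintype ι] [MeasurableSpace X] (μ : Measure X)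
    [IsProbabilityMeasure μ] (A : Finset ι) (F : X → ℝ≥0∞) (hF : Measurable F) :
    ∫⁻ ω, ∏ e ∈ A, F (ω e) ∂(Measure.pi fun _ : ι => μ) = (∫⁻ x, F x ∂μ) ^ A.card := by
  have h1 := iIndepFun_pi (μ := fun _ : ι => μ) (X := fun _ => F) (fun _ => hF.aemeasurable)
  refine (lintegral_prod_eq_prod_lintegral_of_indepFun A (fun e (ω : ι → X) => F (ω e)) h1
    (fun e => hF.comp (measurable_pi_apply e))).trans ?_
  rw [Finset.prod_congr rfl, Finset.prod_const]
  intro e _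
  exact (measurePreserving_eval (fun _ : ι => μ) e).lintegral_comp hF

/-- weight of one edge -/
def wt (f : ℝ → ℝ≥0∞) (y : LabelSpace) : ℝ≥0∞ := ∏ i, f (y.2 i)

lemma measurable_wt {f : ℝ → ℝ≥0∞} (hf : Measurable f) : Measurable (wt f) := by
  apply measurable_of_sigma
  intro k
  have h : Measurable fun x : Fin k → ℝ => ∏ i ∈ Finset.univ, f (x i) :=
    Finset.measurable_prod Finset.univ fun i _ => hf.comp (measurable_pi_apply i)
  exact h

lemma lintegral_wt (r : ℕ) {f : ℝ → ℝ≥0∞} (hf : Measurable f) :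
    ∫⁻ y, wt f y ∂(edgeMeasure unif01 (Measure.dirac r)) = (∫⁻ x, f x ∂unif01) ^ r := by
  rw [edgeMeasure_dirac, lintegral_map (measurable_wt hf) (measurable_sigma_mk' r)]
  have := lintegral_pi_prod' (ι := Fin r) unif01 Finset.univ f hf
  simpa [wt] using this

/-- two-valued weight -/
def tw (p w : ℝ) (x : ℝ) : ℝ≥0∞ := if x ≤ p then ENNReal.ofReal w else 1

lemma measurable_tw (p w : ℝ) : Measurable (tw p w) :=
  Measurable.ite measurableSet_Iic measurable_const measurable_const

lemma lintegral_tw {p w : ℝ} (hp : 0 ≤ p) (hp1 : p ≤ 1) (hw : 0 ≤ w) :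
    ∫⁻ x, tw p w x ∂unif01 = ENNReal.ofReal (w * p + (1 - p)) := by
  have h : tw p w = fun x => (Iic p).indicator (fun _ => ENNReal.ofReal w) x
      + (Ioi p).indicator (fun _ => 1) x := by
    funext x
    by_cases hx : x ≤ p
    · simp [tw, hx]
    · simp [tw, hx, not_le.1 hx]
  rw [h, lintegral_add_left (measurable_const.indicator measurableSet_Iic),
    lintegral_indicator_const measurableSet_Iic, lintegral_indicator_const measurableSet_Ioi,
    unif01, Measure.restrict_apply measurableSet_Iic, Measure.restrict_apply measurableSet_Ioi]
  have e1 : Iic p ∩ Ioc 0 1 = Ioc 0 p := by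
    ext x; simp only [mem_inter_iff, mem_Iic, mem_Ioc]
    constructor
    · tauto
    · intro h; exact ⟨h.2, h.1, h.2.trans hp1⟩
  have e2 : Ioi p ∩ Ioc 0 1 = Ioc p 1 := by
    ext x; simp only [mem_inter_iff, mem_Ioi, mem_Ioc]
    constructor
    · tauto
    · intro h; exact ⟨h.1, hp.trans_lt h.1, h.2⟩
  rw [e1, e2, Real.volume_Ioc, Real.volume_Ioc, one_mul, sub_zero, ← ENNReal.ofReal_mul hw,
    ← ENNReal.ofReal_add (by positivity) (by linarith)]

/-- number of labels of value at most `p` on the edge set `A` -/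
def cnt {n : ℕ} (A : Finset (Sym2 (Fin n))) (p : ℝ) (ω : Sym2 (Fin n) → LabelSpace) : ℕ :=
  ∑ e ∈ A, Nat.card {i : Fin (ω e).1 // (ω e).2 i ≤ p}

lemma prod_wt {n : ℕ} (A : Finset (Sym2 (Fin n))) (p w : ℝ) (ω : Sym2 (Fin n) → LabelSpace) :
    ∏ e ∈ A, wt (tw p w) (ω e) = ENNReal.ofReal w ^ cnt A p ω := by
  unfold cnt
  rw [← Finset.prod_pow_eq_pow_sum]
  refine Finset.prod_congr rfl fun e _ => ?_
  unfold wt tw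
  rw [Finset.prod_ite, Finset.prod_const, Finset.prod_const_one, mul_one, Nat.card_eq_fintype_card,
    Fintype.card_subtype]

/-- Exponential Markov inequality. -/
lemma markov {n r : ℕ} (A : Finset (Sym2 (Fin n))) {p w : ℝ} (hp : 0 ≤ p) (hp1 : p ≤ 1)
    (hw : 0 ≤ w) {x : ℝ} (hx : 0 < x) (T : Set (Sym2 (Fin n) → LabelSpace))
    (hT : ∀ ω ∈ T, x ≤ w ^ cnt A p ω) :
    contModel (Fin n) (Measure.dirac r) T
      ≤ ENNReal.ofReal ((w * p + (1 - p)) ^ (r * A.card) / x) := by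
  have hm : Measurable fun ω : Sym2 (Fin n) → LabelSpace => ∏ e ∈ A, wt (tw p w) (ω e) :=
    Finset.measurable_prod _ fun e _ =>
      (measurable_wt (measurable_tw p w)).comp (measurable_pi_apply e)
  have h1 := meas_ge_le_lintegral_div (μ := contModel (Fin n) (Measure.dirac r))
    hm.aemeasurable (ε := ENNReal.ofReal x) (by simpa using hx) ENNReal.ofReal_ne_top
  rw [show (∫⁻ ω, ∏ e ∈ A, wt (tw p w) (ω e) ∂(contModel (Fin n) (Measure.dirac r))) = _ from
    lintegral_pi_prod' _ A _ (measurable_wt (measurable_tw p w)),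
    lintegral_wt r (measurable_tw p w), lintegral_tw hp hp1 hw, ← pow_mul,
    ← ENNReal.ofReal_pow (by nlinarith [mul_nonneg hw hp]), ← ENNReal.ofReal_div_of_pos hx] at h1
  refine le_trans (measure_mono fun ω hω => ?_) h1
  change ENNReal.ofReal x ≤ ∏ e ∈ A, wt (tw p w) (ω e)
  rw [prod_wt, ← ENNReal.ofReal_pow hw]
  exact ENNReal.ofReal_le_ofReal (hT ω hω)

open Classical in
/-- the edge cut -/
def cutE {n : ℕ} (S : Set (Fin n)) : Finset (Sym2 (Fin n)) :=
  Finset.univ.filter fun e => ∃ u v, u ∈ S ∧ v ∉ S ∧ e = s(u, v)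

lemma cutE_card {n : ℕ} (S : Set (Fin n)) : (cutE S).card ≤ S.ncard * Sᶜ.ncard := by
  classical
  rw [Set.ncard_eq_toFinset_card' S, Set.ncard_eq_toFinset_card' Sᶜ, ← Finset.card_product]
  refine le_trans (Finset.card_le_card (t := (S.toFinset ×ˢ Sᶜ.toFinset).image
    fun q => s(q.1, q.2)) ?_) Finset.card_image_le
  intro e he
  obtain ⟨u, v, hu, hv, rfl⟩ : ∃ u v, u ∈ S ∧ v ∉ S ∧ e = s(u, v) := by simpa [cutE] using he
  exact Finset.mem_image.2 ⟨(u, v), by simp [hu, hv], rfl⟩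

lemma cutCount_le {n : ℕ} (ω : Sym2 (Fin n) → LabelSpace) (S : Set (Fin n)) (t p : ℝ)
    (h : t < rank ω p) : cutCount ω S t ≤ cnt (cutE S) p ω := by
  classical
  unfold cutCount cnt
  rw [finsum_mem_eq_finite_toFinset_sum _ (Set.toFinite _)]
  have : (Set.toFinite {e : Sym2 (Fin n) | ∃ u v, u ∈ S ∧ v ∉ S ∧ e = s(u, v)}).toFinset
      = cutE S := by
    ext e; simp [cutE]
  rw [this]
  refine Finset.sum_le_sum fun e _ => ?_
  rw [Nat.card_eq_fintype_card, Nat.card_eq_fintype_card]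
  refine Fintype.card_subtype_mono _ _ fun i hi => ?_
  by_contra hlt
  push Not at hlt
  have hmono : rank ω p ≤ rank ω ((ω e).2 i) := by
    unfold rank
    refine Finset.sum_le_sum fun e' _ => ?_
    rw [Nat.card_eq_fintype_card, Nat.card_eq_fintype_card]
    exact Fintype.card_subtype_mono _ _ fun j hj => le_trans hj hlt.le
  have : (rank ω p : ℝ) ≤ rank ω ((ω e).2 i) := by exact_mod_cast hmono
  have hi' : (rank ω ((ω e).2 i) : ℝ) ≤ t := hi
  linarith

lemma card_mul_ge {n : ℕ} (S : Set (Fin n)) (h1 : S.Nonempty) (h2 : S ≠ univ) :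
    n - 1 ≤ S.ncard * Sᶜ.ncard := by
  have a : 0 < S.ncard := (Set.ncard_pos).2 h1
  have b : 0 < Sᶜ.ncard := (Set.ncard_pos).2 (Set.nonempty_compl.2 h2)
  have c := Set.ncard_add_ncard_compl S
  rw [Nat.card_eq_fintype_card, Fintype.card_fin] at c
  have : n ≤ S.ncard * Sᶜ.ncard + 1 := by nlinarith
  omega

/-- Probability that a fixed cut is bad. -/
lemma cut_bound {n r : ℕ} (hr : 0 < r) {β p : ℝ} (hβ : 0 < β) (hp : 0 < p) (hp1 : p ≤ 1)
    (hpβ : (1 / p) ^ β = 16) (S : Set (Fin n)) (h1 : S.Nonempty) (h2 : S ≠ univ) :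
    contModel (Fin n) (Measure.dirac r)
      {ω | β * r * S.ncard * ((n : ℝ) - S.ncard) < (cnt (cutE S) p ω : ℝ)}
      ≤ ENNReal.ofReal ((1 / 8) ^ (n - 1)) := by
  set M : ℕ := r * (S.ncard * Sᶜ.ncard) with hM
  have c := Set.ncard_add_ncard_compl S
  rw [Nat.card_eq_fintype_card, Fintype.card_fin] at c
  have c' : (n : ℝ) - S.ncard = Sᶜ.ncard := by rw [sub_eq_iff_eq_add']; exact_mod_cast c.symm
  have hp' : 1 ≤ 1 / p := by rw [le_div_iff₀ hp]; linarith
  refine (markov (cutE S) hp.le hp1 (w := 1 / p) (by positivity) (x := 16 ^ M) (by positivity) _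
    ?_).trans (ENNReal.ofReal_le_ofReal ?_)
  · intro ω hω
    have hω' : β * r * S.ncard * ((n : ℝ) - S.ncard) < (cnt (cutE S) p ω : ℝ) := hω
    rw [c'] at hω'
    rw [← hpβ, ← Real.rpow_natCast, ← Real.rpow_natCast, ← Real.rpow_mul (by positivity)]
    apply Real.rpow_le_rpow_of_exponent_le hp'
    rw [hM]; push_cast
    nlinarith
  · have e : 1 / p * p + (1 - p) ≤ 2 := by rw [one_div_mul_cancel hp.ne']; linarith
    have e0 : 0 ≤ 1 / p * p + (1 - p) := by rw [one_div_mul_cancel hp.ne']; linarith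
    calc (1 / p * p + (1 - p)) ^ (r * (cutE S).card) / 16 ^ M
        ≤ 2 ^ (r * (cutE S).card) / 16 ^ M := by gcongr
      _ ≤ 2 ^ M / 16 ^ M := by
          gcongr
          · norm_num
          · exact Nat.mul_le_mul_left r (cutE_card S)
      _ = (1 / 8 : ℝ) ^ M := by rw [← div_pow]; norm_num
      _ ≤ (1 / 8) ^ (n - 1) := by
          apply pow_le_pow_of_le_one (by norm_num) (by norm_num)
          exact (card_mul_ge S h1 h2).trans (Nat.le_mul_of_pos_left _ hr)

/-- Lower tail for the total number of labels of value at most `p`. -/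
lemma rank_bound {n r : ℕ} (hr : 0 < r) {p : ℝ} (hp : 0 < p) (hp1 : p ≤ 1) (t : ℝ) :
    contModel (Fin n) (Measure.dirac r) {ω | (rank ω p : ℝ) ≤ t}
      ≤ ENNReal.ofReal ((Real.exp (-1) * p + (1 - p)) ^ (n.choose 2) * Real.exp t) := by
  have hc : (Finset.univ.filter (fun e : Sym2 (Fin n) => ¬ e.IsDiag)).card = n.choose 2 := by
    rw [← Fintype.card_subtype, Sym2.card_subtype_not_diag, Fintype.card_fin]
  have he : Real.exp (-1) ≤ 1 := Real.exp_le_one_iff.2 (by norm_num)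
  have he0 := Real.exp_pos (-1)
  refine (markov (Finset.univ.filter (fun e : Sym2 (Fin n) => ¬ e.IsDiag)) hp.le hp1
    (w := Real.exp (-1)) he0.le (x := Real.exp (-t)) (Real.exp_pos _) _ ?_).trans
    (ENNReal.ofReal_le_ofReal ?_)
  · intro ω hω
    have hω' : (rank ω p : ℝ) ≤ t := hω
    rw [← Real.exp_nat_mul]
    apply Real.exp_le_exp.2
    change -t ≤ (rank ω p : ℝ) * (-1)
    linarith
  · rw [hc, Real.exp_neg t, div_inv_eq_mul]
    gcongr ?_ * _
    apply pow_le_pow_of_le_one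
    · nlinarith
    · nlinarith
    · exact Nat.le_mul_of_pos_left _ hr

lemma total_bound {n r : ℕ} (hr : 0 < r) {β p : ℝ} (hβ : 0 < β) (hp : 0 < p) (hp1 : p ≤ 1)
    (hpβ : (1 / p) ^ β = 16) (t : ℝ) :
    contModel (Fin n) (Measure.dirac r) {ω | ∃ S : Set (Fin n),
            S.Nonempty ∧ S ≠ Set.univ ∧
              β * r * S.ncard * ((n : ℝ) - S.ncard) < (cutCount ω S t : ℝ)}
      ≤ ENNReal.ofReal ((Real.exp (-1) * p + (1 - p)) ^ (n.choose 2) * Real.exp t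
        + 2 ^ n * (1 / 8) ^ (n - 1)) := by
  classical
  have hnn : 0 ≤ Real.exp (-1) * p + (1 - p) :=
    add_nonneg (mul_nonneg (Real.exp_pos _).le hp.le) (by linarith)
  have hsub : {ω : Sym2 (Fin n) → LabelSpace | ∃ S : Set (Fin n),
            S.Nonempty ∧ S ≠ Set.univ ∧
              β * r * S.ncard * ((n : ℝ) - S.ncard) < (cutCount ω S t : ℝ)}
      ⊆ {ω | (rank ω p : ℝ) ≤ t} ∪ ⋃ S : Set (Fin n), {ω | S.Nonempty ∧ S ≠ univ ∧
          β * r * S.ncard * ((n : ℝ) - S.ncard) < (cnt (cutE S) p ω : ℝ)} := by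
    rintro ω ⟨S, h1, h2, h3⟩
    by_cases h : (rank ω p : ℝ) ≤ t
    · exact Or.inl h
    · refine Or.inr (mem_iUnion.2 ⟨S, h1, h2, h3.trans_le ?_⟩)
      exact_mod_cast cutCount_le ω S t p (not_le.1 h)
  refine (measure_mono hsub).trans ((measure_union_le _ _).trans ?_)
  rw [ENNReal.ofReal_add (by positivity) (by positivity)]
  refine add_le_add (rank_bound hr hp hp1 t) ((measure_iUnion_fintype_le _ _).trans ?_)
  refine (Finset.sum_le_card_nsmul _ _ (ENNReal.ofReal ((1 / 8) ^ (n - 1))) fun S _ => ?_).trans ?_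
  · by_cases h : S.Nonempty ∧ S ≠ univ
    · refine (measure_mono fun ω hω => ?_).trans (cut_bound hr hβ hp hp1 hpβ S h.1 h.2)
      exact hω.2.2
    · rw [show {ω : Sym2 (Fin n) → LabelSpace | S.Nonempty ∧ S ≠ univ ∧
          β * r * S.ncard * ((n : ℝ) - S.ncard) < (cnt (cutE S) p ω : ℝ)} = ∅ from
          eq_empty_of_forall_notMem fun ω hω => h ⟨hω.1, hω.2.1⟩]
      simp
  · rw [Finset.card_univ, Fintype.card_set, Fintype.card_fin, nsmul_eq_mul,
      ENNReal.ofReal_mul (by positivity)]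
    gcongr
    rw [ENNReal.ofReal_pow (by norm_num)]
    simp

lemma tendsto_first (α c : ℝ) (hα : 0 < α) (hc0 : 0 < c) (hc1 : c < 1) :
    Tendsto (fun n : ℕ => c ^ (n.choose 2) * Real.exp (α * n * Real.log n) * n) atTop (𝓝 0) := by
  set d := - Real.log c with hd
  have hd0 : 0 < d := by have := Real.log_neg hc0 hc1; linarith
  have hlog : ∀ᶠ n : ℕ in atTop, Real.log n ≤ d / (8 * (1 + α)) * n := by
    have := (Real.isLittleO_log_id_atTop.def (show 0 < d / (8 * (1 + α)) by positivity))
    filter_upwards [tendsto_natCast_atTop_atTop.eventually this] with n hn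
    simp only [Real.norm_eq_abs, id] at hn
    rw [abs_of_nonneg (Nat.cast_nonneg (α := ℝ) n)] at hn
    exact (le_abs_self _).trans hn
  have hlim : Tendsto (fun n : ℕ => Real.exp (-(d / 8 * (n : ℝ)))) atTop (𝓝 0) := by
    apply Real.tendsto_exp_atBot.comp
    exact tendsto_neg_atTop_atBot.comp
      (tendsto_natCast_atTop_atTop.const_mul_atTop (by positivity))
  refine squeeze_zero' (Eventually.of_forall fun n => by positivity) ?_ hlim
  filter_upwards [hlog, eventually_ge_atTop 2] with n hn h2
  have hn2 : (2 : ℝ) ≤ n := by exact_mod_cast h2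
  have hcc : c = Real.exp (-d) := by rw [hd, neg_neg, Real.exp_log hc0]
  have hn' : (n : ℝ) = Real.exp (Real.log n) := (Real.exp_log (by linarith)).symm
  have hl0 : 0 ≤ Real.log n := Real.log_nonneg (by linarith)
  calc c ^ (n.choose 2) * Real.exp (α * n * Real.log n) * n
      = Real.exp ((n.choose 2 : ℕ) * (-d) + α * n * Real.log n + Real.log n) := by
        rw [Real.exp_add, Real.exp_add, ← hn', hcc, Real.exp_nat_mul]
    _ ≤ _ := by
      apply Real.exp_le_exp.2
      rw [Nat.cast_choose_two]
      have k1 : (1 + α) * Real.log n ≤ d / 8 * n := by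
        calc (1 + α) * Real.log n ≤ (1 + α) * (d / (8 * (1 + α)) * n) := by gcongr
          _ = d / 8 * n := by field_simp
      have k2 : n * ((1 + α) * Real.log n) ≤ n * (d / 8 * n) := by gcongr
      have k3 : Real.log n ≤ n * Real.log n := by nlinarith
      have k4 : 0 ≤ d * n * (n - 2) := by
        apply mul_nonneg (by positivity); linarith
      nlinarith

lemma tendsto_second :
    Tendsto (fun n : ℕ => (2 : ℝ) ^ n * (1 / 8) ^ (n - 1) * n) atTop (𝓝 0) := by
  have h := (tendsto_self_mul_const_pow_of_lt_one (r := (1 / 4 : ℝ)) (by norm_num)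
    (by norm_num)).const_mul 8
  rw [mul_zero] at h
  refine h.congr' ?_
  filter_upwards [eventually_ge_atTop 1] with n hn
  obtain ⟨m, rfl⟩ := Nat.exists_eq_add_of_le' hn
  rw [Nat.add_sub_cancel, show (1 / 4 : ℝ) = 2 * (1 / 8) by norm_num, mul_pow, pow_succ (1 / 8 : ℝ)]
  ring

/-- With probability `1 - o(n⁻¹)`, no cut of the order discretization
of `Γ_{[n]}(ψ)` (`ψ` degenerate at `r`) has more than `β·r·|S|·(n-|S|)` of its labels
among the first `α·n·log n`. -/
theorem statement17 (r : ℕ) (hr : 0 < r) (α β : ℝ) (hα : 0 < α) (hβ : 0 < β) :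
    Tendsto (fun n : ℕ =>
        contModel (Fin n) (Measure.dirac r) {ω | ∃ S : Set (Fin n),
            S.Nonempty ∧ S ≠ Set.univ ∧
              β * r * S.ncard * ((n : ℝ) - S.ncard)
                < (cutCount ω S (α * n * Real.log n) : ℝ)}
          * (n : ℝ≥0∞))
      atTop (𝓝 0) := by
  obtain ⟨p, hp, hp1, hpβ⟩ : ∃ p : ℝ, 0 < p ∧ p < 1 ∧ (1 / p) ^ β = 16 := by
    refine ⟨((16 : ℝ) ^ (1 / β))⁻¹, by positivity, ?_, ?_⟩
    · exact inv_lt_one_of_one_lt₀ (Real.one_lt_rpow (by norm_num) (by positivity))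
    · rw [one_div, inv_inv, ← Real.rpow_mul (by norm_num), one_div_mul_cancel hβ.ne',
        Real.rpow_one]
  have he : Real.exp (-1) < 1 := by rw [Real.exp_lt_one_iff]; norm_num
  have he0 := Real.exp_pos (-1)
  have hlim := (tendsto_first α (Real.exp (-1) * p + (1 - p)) hα
    (by nlinarith [mul_pos he0 hp]) (by nlinarith)).add tendsto_second
  rw [add_zero] at hlim
  have hlim' := ENNReal.tendsto_ofReal hlim
  rw [ENNReal.ofReal_zero] at hlim'
  refine tendsto_of_tendsto_of_tendsto_of_le_of_le tendsto_const_nhds hlim' (fun _ => zero_le)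
    fun n => ?_
  refine (mul_le_mul_left (total_bound hr hβ hp hp1.le hpβ (α * n * Real.log n)) _).trans
    (le_of_eq ?_)
  rw [← ENNReal.ofReal_natCast n, ← ENNReal.ofReal_mul' (Nat.cast_nonneg n), add_mul]

end RTG
end
end
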